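/- arXiv:2007.09349 — 2 statements merged into one kernel-verified Lean document; each statement's English description precedes it below -/
import Mathlib

section
/- Let X ~ E_n(μ, Σ, g_n), X* ~ E_n(μ, Σ, Ḡ_n) and X** ~ E_n(μ, Σ, 𝒢̄_n), and let p₁,…,p_n be nonnegative integers with p₁ ≥ 2 such that all the expectations below exist and the regularity conditions of Theorem 1 hold for f(x) = x₁^{p₁−2} ∏_{k=2}^n x_k^{p_k}. Then E[∏_{i=1}^n X_i^{p_i}] = b_n* σ₁₁ E[(X*₁)^{p₁−2} ∏_{k=2}^n (X*_k)^{p_k}] + b_n** { σ₁₁²(p₁−2)(p₁−3) E[(X**₁)^{p₁−4} ∏_{k=2}^n (X**_k)^{p_k}] + 2 Σ_{j=2}^n σ₁₁ σ_{j1}(p₁−2)p_j E[(X**₁)^{p₁−3}(X**_j)^{p_j−1} ∏_{k=2,k≠j}^n (X**_k)^{p_k}] + Σ_{j=2}^n σ_{j1}² p_j(p_j−1) E[(X**₁)^{p₁−2}(X**_j)^{p_j−2} ∏_{k=2,k≠j}^n (X**_k)^{p_k}] + Σ_{j=2}^n Σ_{i=2,i≠j}^n σ_{j1}σ_{i1}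 p_j p_i E[(X**_i)^{p_i−1}(X**_j)^{p_j−1}(X**₁)^{p₁−2} ∏_{k=2,k≠i,j}^n (X**_k)^{p_k}] } + 2 b_n* μ₁ { σ₁₁(p₁−2) E[(X*₁)^{p₁−3} ∏_{k=2}^n (X*_k)^{p_k}] + Σ_{j=2}^n σ_{j1} p_j E[(X*_j)^{p_j−1}(X*₁)^{p₁−2} ∏_{k=2,k≠j}^n (X*_k)^{p_k}] } + μ₁² E[X₁^{p₁−2} ∏_{k=2}^n X_k^{p_k}]. -/
open MeasureTheory Real Set Filter Matrix Function

/-- The normalizing constant `c_n = (Γ(n/2)/(2π)^(n/2))(∫₀^∞ t^(n/2-1) g(t) dt)⁻¹`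
of a density generator `g`. -/
noncomputable def normConst (n : ℕ) (g : ℝ → ℝ) : ℝ :=
  Real.Gamma ((n : ℝ) / 2) / (2 * π) ^ ((n : ℝ) / 2) *
    (∫ t in Ioi (0 : ℝ), t ^ ((n : ℝ) / 2 - 1) * g t)⁻¹

/-- The density `(c_n/√|Σ|) g((x-μ)ᵀ Σ⁻¹ (x-μ)/2)` of an elliptical random vector
`X ~ E_n(μ, Σ, g)`. -/
noncomputable def ePdf (n : ℕ) (μ : Fin n → ℝ) (S : Matrix (Fin n) (Fin n) ℝ) (g : ℝ → ℝ)
    (x : Fin n → ℝ) : ℝ :=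
  normConst n g / Real.sqrt S.det * g (1 / 2 * ((x - μ) ⬝ᵥ S⁻¹.mulVec (x - μ)))

/-- First partial derivative `∇_i f`. -/
noncomputable def pd (n : ℕ) (f : (Fin n → ℝ) → ℝ) (i : Fin n) (x : Fin n → ℝ) : ℝ :=
  fderiv ℝ f x (Pi.single i 1)

/-- Second partial derivative `∇_{i,j} f`. -/
noncomputable def pd2 (n : ℕ) (f : (Fin n → ℝ) → ℝ) (i j : Fin n) (x : Fin n → ℝ) : ℝ :=
  fderiv ℝ (fun y => pd n f j y) x (Pi.single i 1)

/-- The product moment `E[∏ᵢ Xᵢ^(qᵢ)]` of `X ~ E_n(μ, Σ, g)`. -/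
noncomputable def eMom (n : ℕ) (μ : Fin n → ℝ) (S : Matrix (Fin n) (Fin n) ℝ) (g : ℝ → ℝ)
    (q : Fin n → ℕ) : ℝ :=
  ∫ x : Fin n → ℝ, (∏ k : Fin n, (x k) ^ q k) * ePdf n μ S g x

lemma aux_tail (g : ℝ → ℝ) (c t : ℝ) (ht : 0 ≤ t) :
    (IntegrableOn g (Ioi (1/2*(t^2+c))) ↔ IntegrableOn (fun s => s * g (1/2*(s^2+c))) (Ioi t)) ∧
    ∫ v in Ioi (1/2*(t^2+c)), g v = ∫ s in Ioi t, s * g (1/2*(s^2+c)) := by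
  have himg : (fun s : ℝ => 1/2*(s^2+c)) '' (Ioi t) = Ioi (1/2*(t^2+c)) := by
    ext y
    simp only [mem_image, mem_Ioi]
    constructor
    · rintro ⟨s, hs, rfl⟩
      nlinarith
    · intro hy
      have h0 : t^2 < 2*y - c := by linarith
      refine ⟨√(2*y-c), (Real.lt_sqrt ht).2 h0, ?_⟩
      rw [Real.sq_sqrt (by nlinarith [sq_nonneg t])]
      ring
  have hder : ∀ x ∈ Ioi t, HasDerivWithinAt (fun s : ℝ => 1/2*(s^2+c)) x (Ioi t) x := by
    intro x _
    have : HasDerivAt (fun s : ℝ => 1/2*(s^2+c)) (1/2*(((2:ℕ):ℝ)*x^(2-1))) x :=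
      ((hasDerivAt_pow 2 x).add_const c).const_mul (1/2)
    exact (this.congr_deriv (by norm_num; ring)).hasDerivWithinAt
  have hinj : InjOn (fun s : ℝ => 1/2*(s^2+c)) (Ioi t) := by
    intro x hx y hy hxy
    simp only [mem_Ioi] at hx hy
    have : (x-y)*(x+y) = 0 := by simp only at hxy; linarith
    rcases mul_eq_zero.1 this with h | h <;> linarith
  have hcongr : ∀ s ∈ Ioi t, |s| • g (1/2*(s^2+c)) = s * g (1/2*(s^2+c)) := by
    intro s hs
    simp only [mem_Ioi] at hs
    rw [abs_of_pos (by linarith), smul_eq_mul]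
  constructor
  · rw [← himg, integrableOn_image_iff_integrableOn_abs_deriv_smul measurableSet_Ioi hder hinj]
    exact integrableOn_congr_fun hcongr measurableSet_Ioi
  · rw [← himg, integral_image_eq_integral_abs_deriv_smul measurableSet_Ioi hder hinj]
    exact setIntegral_congr_fun measurableSet_Ioi hcongr

lemma half_ibp (k φ φ' : ℝ → ℝ) (hk : IntegrableOn k (Ioi 0))
    (hφ : ∀ t, HasDerivAt φ (φ' t) t) (hφ' : Continuous φ')
    (h3 : IntegrableOn (fun t => φ t * ∫ s in Ioi t, k s) (Ioi 0))
    (h1 : IntegrableOn (fun t => φ' t * ∫ s in Ioi t, k s) (Ioi 0))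
    (h2 : IntegrableOn (fun t => φ t * k t) (Ioi 0)) :
    ∫ t in Ioi 0, φ' t * (∫ s in Ioi t, k s) =
      - (φ 0 * ∫ s in Ioi 0, k s) + ∫ t in Ioi 0, φ t * k t := by
  have hii : ∀ R, 0 ≤ R → IntervalIntegrable k volume 0 R := fun R hR =>
    (intervalIntegrable_iff_integrableOn_Ioc_of_le hR).2 (hk.mono_set Ioc_subset_Ioi_self)
  have hH : ∀ R, 0 ≤ R → ∫ s in Ioi R, k s = (∫ s in Ioi 0, k s) - ∫ s in (0:ℝ)..R, k s := by
    intro R hR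
    rw [intervalIntegral.integral_of_le hR, ← Ioc_union_Ioi_eq_Ioi hR,
      setIntegral_union Ioc_disjoint_Ioi_same measurableSet_Ioi (hk.mono_set Ioc_subset_Ioi_self)
        (hk.mono_set (Ioi_subset_Ioi hR))]
    ring
  have hd : deriv φ = φ' := funext fun t => (hφ t).deriv
  have hC1 : ContDiff ℝ 1 φ := by
    rw [contDiff_one_iff_deriv]
    exact ⟨fun t => (hφ t).differentiableAt, hd ▸ hφ'⟩
  have key : ∀ R, 0 ≤ R → (∫ t in (0:ℝ)..R, φ' t * (∫ s in Ioi t, k s)) =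
      φ R * (∫ s in Ioi R, k s) - φ 0 * (∫ s in Ioi 0, k s) + ∫ t in (0:ℝ)..R, φ t * k t := by
    intro R hR
    have hac1 : AbsolutelyContinuousOnInterval φ 0 R :=
      hC1.contDiffOn.absolutelyContinuousOnInterval
    have hac2 := (hii R hR).absolutelyContinuousOnInterval_intervalIntegral
      (c := 0) left_mem_uIcc
    have := hac1.integral_mul_deriv_eq_deriv_mul hac2
    have e1 : ∫ x in (0:ℝ)..R, φ x * deriv (fun x ↦ ∫ v in (0:ℝ)..x, k v) x =
        ∫ t in (0:ℝ)..R, φ t * k t := by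
      apply intervalIntegral.integral_congr_ae
      filter_upwards [(hii R hR).ae_hasDerivAt_integral] with x hx hxm
      rw [(hx (uIoc_subset_uIcc hxm) 0 left_mem_uIcc).deriv]
    have e2 : ∫ t in (0:ℝ)..R, φ' t * (∫ s in Ioi t, k s) =
        (∫ t in (0:ℝ)..R, φ' t * (∫ s in Ioi 0, k s)) -
          ∫ t in (0:ℝ)..R, φ' t * ∫ s in (0:ℝ)..t, k s := by
      rw [← intervalIntegral.integral_sub]
      · apply intervalIntegral.integral_congr
        intro t ht
        rw [uIcc_of_le hR] at ht
        simp only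
        rw [hH t ht.1]; ring
      · exact (hφ'.mul continuous_const).intervalIntegrable _ _
      · exact (hφ'.continuousOn.mul hac2.continuousOn).intervalIntegrable
    have e3 : ∫ t in (0:ℝ)..R, φ' t * (∫ s in Ioi 0, k s) = (φ R - φ 0) * (∫ s in Ioi 0, k s) := by
      rw [intervalIntegral.integral_mul_const, intervalIntegral.integral_eq_sub_of_hasDerivAt
        (fun x _ => hφ x) (hφ'.intervalIntegrable _ _)]
    rw [e1, hd] at this
    rw [e2, e3, hH R hR, this, intervalIntegral.integral_same]
    ring
  have t1 := intervalIntegral_tendsto_integral_Ioi 0 h1 tendsto_id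
  have t2 := intervalIntegral_tendsto_integral_Ioi 0 h2 tendsto_id
  have t4 := (t1.sub t2).add_const (φ 0 * (∫ s in Ioi 0, k s))
  have hlim' := t4.congr' (f₂ := fun t => φ t * ∫ s in Ioi t, k s) (by
    filter_upwards [eventually_ge_atTop 0] with R hR
    simp only [id]
    rw [key R hR]
    ring)
  have hz := IntegrableAtFilter.eq_zero_of_tendsto (μ := volume)
    ⟨Ioi 0, Ioi_mem_atTop 0, h3⟩ (fun s hs => by
      obtain ⟨b, hb⟩ := mem_atTop_sets.1 hs
      exact measure_mono_top (show Ici b ⊆ s from hb) Real.volume_Ici) hlim'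
  have hlim : Tendsto (fun t => φ t * ∫ s in Ioi t, k s) atTop (nhds 0) := hz ▸ hlim'
  have t3 := (hlim.sub_const (φ 0 * (∫ s in Ioi 0, k s))).add t2
  rw [zero_sub] at t3
  refine tendsto_nhds_unique t1 (t3.congr' ?_)
  filter_upwards [eventually_ge_atTop 0] with R hR
  simp only [id]
  rw [key R hR]

lemma line_ibp (g G φ φ' : ℝ → ℝ) (c : ℝ) (hG : ∀ u, G u = ∫ v in Ioi u, g v)
    (hg : IntegrableOn g (Ioi (1/2*c)))
    (hφ : ∀ t, HasDerivAt φ (φ' t) t) (hφ' : Continuous φ')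
    (h3 : Integrable (fun t => φ t * G (1/2*(t^2+c))))
    (h1 : Integrable (fun t => φ' t * G (1/2*(t^2+c))))
    (h2 : Integrable (fun t => φ t * (t * g (1/2*(t^2+c))))) :
    ∫ t, φ' t * G (1/2*(t^2+c)) = ∫ t, φ t * (t * g (1/2*(t^2+c))) := by
  have hG' : ∀ t, 0 ≤ t → G (1/2*(t^2+c)) = ∫ s in Ioi t, s * g (1/2*(s^2+c)) := fun t ht => by
    rw [hG, (aux_tail g c t ht).2]
  have hk : IntegrableOn (fun s => s * g (1/2*(s^2+c))) (Ioi 0) := by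
    rw [← (aux_tail g c 0 le_rfl).1]; simpa using hg
  have h3n : Integrable (fun t => φ (-t) * G (1/2*(t^2+c))) := by simpa using h3.comp_neg
  have h1n : Integrable (fun t => φ' (-t) * G (1/2*(t^2+c))) := by simpa using h1.comp_neg
  have h2n : Integrable (fun t => φ (-t) * (t * g (1/2*(t^2+c)))) := by
    simpa using h2.comp_neg.neg
  have eo : ∀ ψ : ℝ → ℝ, EqOn (fun t => ψ t * G (1/2*(t^2+c)))
      (fun t => ψ t * ∫ s in Ioi t, s * g (1/2*(s^2+c))) (Ioi 0) := fun ψ t ht => by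
    simp only
    rw [hG' t (le_of_lt ht)]
  have A := half_ibp _ φ φ' hk hφ hφ' (h3.integrableOn.congr_fun (eo φ) measurableSet_Ioi)
    (h1.integrableOn.congr_fun (eo φ') measurableSet_Ioi) h2.integrableOn
  have B := half_ibp _ (fun t => φ (-t)) (fun t => - φ' (-t)) hk
    (fun t => ((hφ (-t)).scomp t (hasDerivAt_neg t)).congr_deriv (by simp)) (by fun_prop)
    (h3n.integrableOn.congr_fun (eo fun t => φ (-t)) measurableSet_Ioi)
    (by simpa using (h1n.integrableOn.congr_fun (eo fun t => φ' (-t)) measurableSet_Ioi).neg)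
    h2n.integrableOn
  rw [← setIntegral_congr_fun measurableSet_Ioi (eo φ')] at A
  rw [← setIntegral_congr_fun measurableSet_Ioi (eo fun t => -φ' (-t))] at B
  have s1 := (intervalIntegral.integral_Iic_add_Ioi (b := (0:ℝ)) h1.integrableOn h1.integrableOn)
  have s2 := (intervalIntegral.integral_Iic_add_Ioi (b := (0:ℝ)) h2.integrableOn h2.integrableOn)
  have n1 := integral_comp_neg_Ioi (0:ℝ) (fun t => φ' t * G (1/2*(t^2+c)))
  have n2 := integral_comp_neg_Ioi (0:ℝ) (fun t => φ t * (t * g (1/2*(t^2+c))))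
  simp only [neg_zero, neg_sq] at n1 n2 B
  rw [← s1, ← s2, ← n1, ← n2, A]
  have n3 : ∀ x : ℝ, φ (-x) * (-x * g (1/2*(x^2+c))) = -(φ (-x) * (x * g (1/2*(x^2+c)))) :=
    fun x => by ring
  simp only [neg_mul, integral_neg] at B
  simp only [n3, integral_neg]
  linarith

lemma stein (m : ℕ) (g G : ℝ → ℝ) (hG : ∀ u, G u = ∫ v in Ioi u, g v)
    (hgi : ∀ u, 0 < u → IntegrableOn g (Ioi u)) (hg0 : m = 0 → IntegrableOn g (Ioi 0))
    (φ φ' : (Fin (m+1) → ℝ) → ℝ)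
    (hφ : ∀ z t, HasDerivAt (fun s => φ (update z 0 s)) (φ' (update z 0 t)) t)
    (hφ' : Continuous φ')
    (h3 : Integrable (fun z => φ z * G (1/2 * (z ⬝ᵥ z))))
    (h1 : Integrable (fun z => φ' z * G (1/2 * (z ⬝ᵥ z))))
    (h2 : Integrable (fun z => φ z * (z 0 * g (1/2 * (z ⬝ᵥ z))))) :
    ∫ z, φ' z * G (1/2 * (z ⬝ᵥ z)) = ∫ z, φ z * (z 0 * g (1/2 * (z ⬝ᵥ z))) := by
  have mp := (volume_preserving_piFinSuccAbove (fun _ : Fin (m+1) => ℝ) 0).symm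
  have he : ∀ (t : ℝ) (y : Fin m → ℝ),
      (MeasurableEquiv.piFinSuccAbove (fun _ : Fin (m+1) => ℝ) 0).symm (t, y)
        = update (Fin.cons 0 y : Fin (m+1) → ℝ) 0 t := by
    intro t y
    rw [Fin.update_cons_zero]
    simp [MeasurableEquiv.piFinSuccAbove]
    rfl
  have hdot : ∀ (t : ℝ) (y : Fin m → ℝ), update (Fin.cons 0 y : Fin (m+1) → ℝ) 0 t ⬝ᵥ
      update (Fin.cons 0 y : Fin (m+1) → ℝ) 0 t = t^2 + y ⬝ᵥ y := by
    intro t y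
    rw [Fin.update_cons_zero]
    simp [dotProduct, Fin.sum_univ_succ, sq]
  have h1' := (mp.integrable_comp_emb (MeasurableEquiv.measurableEmbedding _)).2 h1
  have h3' := (mp.integrable_comp_emb (MeasurableEquiv.measurableEmbedding _)).2 h3
  have h2' := (mp.integrable_comp_emb (MeasurableEquiv.measurableEmbedding _)).2 h2
  rw [← mp.integral_comp' (fun z => φ' z * G (1/2 * (z ⬝ᵥ z))),
    ← mp.integral_comp' (fun z => φ z * (z 0 * g (1/2 * (z ⬝ᵥ z))))]
  simp only [Function.comp_def] at h1' h2' h3'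
  rw [Measure.volume_eq_prod] at h1' h2' h3' ⊢
  rw [integral_prod_symm _ h1', integral_prod_symm _ h2']
  apply integral_congr_ae
  have hne : ∀ᵐ y : Fin m → ℝ, IntegrableOn g (Ioi (1/2 * (y ⬝ᵥ y))) := by
    rcases Nat.eq_zero_or_pos m with hm | hm
    · subst hm
      refine Eventually.of_forall fun y => ?_
      simpa using hg0 rfl
    · have : Nonempty (Fin m) := ⟨⟨0, hm⟩⟩
      have : ∀ᵐ y : Fin m → ℝ, y ≠ 0 := by
        simp [ae_iff, measure_singleton]
      filter_upwards [this] with y hy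
      apply hgi
      have : 0 < y ⬝ᵥ y := by
        have := Matrix.dotProduct_star_self_pos_iff (v := y)
        simpa using this.2 hy
      positivity
  filter_upwards [h1'.prod_left_ae, h2'.prod_left_ae, h3'.prod_left_ae, hne] with y a1 a2 a3 hy
  simp only [he, hdot, update_self] at a1 a2 a3 ⊢
  refine line_ibp g G (fun t => φ (update (Fin.cons 0 y : Fin (m+1) → ℝ) 0 t))
    (fun t => φ' (update (Fin.cons 0 y : Fin (m+1) → ℝ) 0 t)) (y ⬝ᵥ y) hG hy (hφ _)
    (by fun_prop) a3 a1 a2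

lemma normConst_pos (n : ℕ) (hn : 0 < n) (g : ℝ → ℝ)
    (hg_pos : 0 < ∫ t in Ioi (0 : ℝ), t ^ ((n : ℝ) / 2 - 1) * g t) : 0 < normConst n g := by
  unfold normConst
  have : 0 < (n:ℝ)/2 := by positivity
  have := Real.Gamma_pos_of_pos this
  positivity

lemma gen_reg (n : ℕ) (g G : ℝ → ℝ)
    (hg_int : IntegrableOn (fun t : ℝ => t ^ ((n : ℝ) / 2 - 1) * g t) (Ioi 0))
    (hG : ∀ u : ℝ, G u = ∫ v in Ioi u, g v)
    (hG_pos : 0 < ∫ t in Ioi (0 : ℝ), t ^ ((n : ℝ) / 2 - 1) * G t) :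
    (∀ u, 0 < u → IntegrableOn g (Ioi u)) ∧ (n = 1 → IntegrableOn g (Ioi 0)) := by
  obtain ⟨u0, hu0, hGu⟩ : ∃ u0, 0 < u0 ∧ G u0 ≠ 0 := by
    by_contra! h
    rw [setIntegral_congr_fun (g := fun _ => (0:ℝ)) measurableSet_Ioi
      (fun t ht => by simp only; rw [h t ht, mul_zero])] at hG_pos
    simp at hG_pos
  have h0 : IntegrableOn g (Ioi u0) := by
    by_contra h
    exact hGu (by rw [hG]; exact integral_undef h)
  have hcomb : ∀ u, 0 ≤ u → IntegrableOn g (Ioc u u0) → IntegrableOn g (Ioi u) := by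
    intro u hu h
    refine (h.union h0).mono_set fun x hx => ?_
    rcases le_or_gt x u0 with h' | h'
    · exact Or.inl ⟨hx, h'⟩
    · exact Or.inr h'
  have hmul : ∀ u, 0 ≤ u →
      ContinuousOn (fun t : ℝ => t ^ (-((n : ℝ) / 2 - 1))) (Icc u u0) →
      IntegrableOn g (Ioc u u0) := by
    intro u hu hc
    have := IntegrableOn.continuousOn_mul_of_subset hc
      (hg_int.mono_set (fun x (hx : x ∈ Ioc u u0) => show x ∈ Ioi 0 from hu.trans_lt hx.1))
      isCompact_Icc measurableSet_Ioc Ioc_subset_Icc_self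
    refine this.congr_fun (fun t ht => ?_) measurableSet_Ioc
    have ht0 : 0 < t := hu.trans_lt ht.1
    simp only
    rw [← mul_assoc, ← Real.rpow_add ht0]
    simp
  constructor
  · intro u hu
    refine hcomb u hu.le (hmul u hu.le ?_)
    exact ContinuousOn.rpow_const continuousOn_id fun x hx => Or.inl (hu.trans_le hx.1).ne'
  · intro h1
    refine hcomb 0 le_rfl (hmul 0 le_rfl ?_)
    exact ContinuousOn.rpow_const continuousOn_id fun x hx => Or.inr (by subst h1; norm_num)

section cov
variable {n : ℕ} (A S : Matrix (Fin n) (Fin n) ℝ) (μ : Fin n → ℝ)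

lemma detA (hS : S.PosDef) (hA : A * Aᵀ = S) : |A.det| = √S.det ∧ A.det ≠ 0 := by
  have h : S.det = A.det ^ 2 := by rw [← hA, det_mul, det_transpose, sq]
  have hp := hS.det_pos
  refine ⟨by rw [h, Real.sqrt_sq_eq_abs], fun h0 => ?_⟩
  rw [h, h0] at hp
  simp at hp

lemma quad (hS : S.PosDef) (hA : A * Aᵀ = S) (z : Fin n → ℝ) :
    (A.mulVec z + μ - μ) ⬝ᵥ S⁻¹.mulVec (A.mulVec z + μ - μ) = z ⬝ᵥ z := by
  have hu : IsUnit A.det := (detA A S hS hA).2.isUnit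
  have hu' : IsUnit Aᵀ.det := by rwa [det_transpose]
  rw [add_sub_cancel_right, ← hA, Matrix.mul_inv_rev, mulVec_mulVec, Matrix.mul_assoc,
    Matrix.nonsing_inv_mul _ hu, Matrix.mul_one, dotProduct_mulVec, ← vecMul_transpose,
    vecMul_vecMul, Matrix.mul_nonsing_inv _ hu', vecMul_one]

lemma cov_data (hS : S.PosDef) (hA : A * Aᵀ = S) :
    (∀ x ∈ (univ : Set (Fin n → ℝ)), HasFDerivWithinAt (fun z => A.mulVec z + μ)
      (LinearMap.toContinuousLinearMap (Matrix.toLin' A)) univ x) ∧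
    InjOn (fun z => A.mulVec z + μ) univ ∧ (fun z => A.mulVec z + μ) '' univ = univ ∧
    |(LinearMap.toContinuousLinearMap (Matrix.toLin' A)).det| = √S.det := by
  have hu : IsUnit A.det := (detA A S hS hA).2.isUnit
  refine ⟨fun x _ => ?_, fun x _ y _ h => ?_, ?_, ?_⟩
  · exact ((LinearMap.toContinuousLinearMap (Matrix.toLin' A)).hasFDerivAt.add_const
      μ).hasFDerivWithinAt
  · have h' : A.mulVec x = A.mulVec y := by simpa using h
    exact Matrix.mulVec_injective_of_isUnit ((Matrix.isUnit_iff_isUnit_det A).2 hu) h'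
  · rw [image_univ, range_eq_univ]
    intro y
    refine ⟨A⁻¹.mulVec (y - μ), ?_⟩
    simp [mulVec_mulVec, Matrix.mul_nonsing_inv _ hu]
  · rw [← (detA A S hS hA).1, ContinuousLinearMap.det]
    simp

lemma cov_integral (hS : S.PosDef) (hA : A * Aᵀ = S) (h : (Fin n → ℝ) → ℝ) :
    ∫ x, h x = √S.det * ∫ z, h (A.mulVec z + μ) := by
  obtain ⟨h1, h2, h3, h4⟩ := cov_data A S μ hS hA
  have := integral_image_eq_integral_abs_det_fderiv_smul volume MeasurableSet.univ h1 h2 h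
  rw [h3, h4] at this
  simpa [integral_const_mul] using this

lemma cov_integrable (hS : S.PosDef) (hA : A * Aᵀ = S) (h : (Fin n → ℝ) → ℝ) :
    Integrable h ↔ Integrable fun z => h (A.mulVec z + μ) := by
  obtain ⟨h1, h2, h3, h4⟩ := cov_data A S μ hS hA
  have := integrableOn_image_iff_integrableOn_abs_det_fderiv_smul volume MeasurableSet.univ h1 h2 h
  rw [h3, h4] at this
  have hp : √S.det ≠ 0 := (Real.sqrt_pos.2 hS.det_pos).ne'
  simpa [integrable_const_mul_iff, hp, integrable_const_mul_iff hp.isUnit] using this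

lemma pd_mono (q : Fin n → ℕ) (j : Fin n) (x : Fin n → ℝ) :
    pd n (fun x => ∏ k, x k ^ q k) j x = q j * ∏ k, x k ^ (update q j (q j - 1)) k := by
  have h : ∀ i ∈ (Finset.univ : Finset (Fin n)), HasFDerivAt (fun x : Fin n → ℝ => x i ^ q i)
      (((q i : ℝ) * x i ^ (q i - 1)) • (ContinuousLinearMap.proj i : (Fin n → ℝ) →L[ℝ] ℝ)) x := by
    intro i _
    have := (ContinuousLinearMap.proj (R := ℝ) (φ := fun _ : Fin n => ℝ) i).hasFDerivAt (x := x)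
    simpa using this.pow (q i)
  have := HasFDerivAt.finsetProd h
  rw [pd, this.fderiv]
  simp only [_root_.sum_apply, _root_.smul_apply,
    ContinuousLinearMap.proj_apply, smul_eq_mul, Pi.single_apply]
  rw [Finset.sum_eq_single j]
  · rw [← Finset.mul_prod_erase Finset.univ _ (Finset.mem_univ j)]
    rw [Finset.prod_congr rfl (g := fun k => x k ^ q k) (s₁ := Finset.univ.erase j)
      (f := fun k => x k ^ (update q j (q j - 1)) k)
      (fun k hk => by rw [update_of_ne (Finset.ne_of_mem_erase hk)])]
    simp
    ring
  · intro b _ hb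
    simp [hb]
  · simp

lemma chain_line (h : (Fin n → ℝ) → ℝ) (hd : Differentiable ℝ h) (i0 : Fin n) (z : Fin n → ℝ)
    (t : ℝ) : HasDerivAt (fun s => h (A.mulVec (update z i0 s) + μ))
      (∑ j, A j i0 * pd n h j (A.mulVec (update z i0 t) + μ)) t := by
  have h1 : HasDerivAt (fun s => A.mulVec (update z i0 s) + μ) (A.mulVec (Pi.single i0 1)) t := by
    exact ((LinearMap.toContinuousLinearMap (Matrix.toLin' A)).hasFDerivAt.comp_hasDerivAt t
      (hasDerivAt_update z i0 t)).add_const μ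
  have h2 := (hd (A.mulVec (update z i0 t) + μ)).hasFDerivAt.comp_hasDerivAt t h1
  refine h2.congr_deriv ?_
  have : A.mulVec (Pi.single i0 1) = ∑ j, A j i0 • (Pi.single j 1 : Fin n → ℝ) := by
    ext k
    simp [Finset.sum_apply, Pi.single_apply]
  rw [this, map_sum]
  simp [pd]
end cov

def dn {n : ℕ} (q : Fin n → ℕ) (j : Fin n) : Fin n → ℕ := update q j (q j - 1)

lemma comb1 {n : ℕ} (i1 : Fin n) (p : Fin n → ℕ) (hp : 2 ≤ p i1) (s : Fin n → ℝ)
    (K : (Fin n → ℕ) → ℝ) :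
    ∑ j, s j * ((update p i1 (p i1 - 2) j : ℕ) : ℝ) * K (dn (update p i1 (p i1 - 2)) j) =
      s i1 * ((p i1 : ℝ) - 2) * K (update p i1 (p i1 - 3)) +
      ∑ j ∈ Finset.univ.erase i1, s j * (p j : ℝ) *
        K (update (update p i1 (p i1 - 2)) j (p j - 1)) := by
  rw [← Finset.add_sum_erase _ _ (Finset.mem_univ i1)]
  congr 1
  · simp only [dn, update_self, update_idem, Nat.sub_sub]
    rw [Nat.cast_sub hp]; norm_num
  · refine Finset.sum_congr rfl fun j hj => ?_
    simp only [dn, update_of_ne (Finset.ne_of_mem_erase hj)]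

lemma comb2 {n : ℕ} (i1 : Fin n) (p : Fin n → ℕ) (hp : 2 ≤ p i1) (s : Fin n → ℝ)
    (K : (Fin n → ℕ) → ℝ) :
    ∑ j, s j * ((update p i1 (p i1 - 2) j : ℕ) : ℝ) *
      ∑ i, s i * ((dn (update p i1 (p i1 - 2)) j i : ℕ) : ℝ) *
        K (dn (dn (update p i1 (p i1 - 2)) j) i) =
      s i1 ^ 2 * ((p i1 : ℝ) - 2) * ((p i1 : ℝ) - 3) * K (update p i1 (p i1 - 4))
            + 2 * ∑ j ∈ Finset.univ.erase i1,
                s i1 * s j * ((p i1 : ℝ) - 2) * (p j : ℝ) *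
                  K (update (update p i1 (p i1 - 3)) j (p j - 1))
            + ∑ j ∈ Finset.univ.erase i1,
                (s j) ^ 2 * (p j : ℝ) * ((p j : ℝ) - 1) *
                  K (update (update p i1 (p i1 - 2)) j (p j - 2))
            + ∑ j ∈ Finset.univ.erase i1, ∑ i ∈ (Finset.univ.erase i1).erase j,
                s j * s i * (p j : ℝ) * (p i : ℝ) *
                  K (update (update (update p i1 (p i1 - 2)) j (p j - 1)) i
                    (p i - 1)) := by
  have c1 : ((p i1 - 2 : ℕ) : ℝ) = (p i1 : ℝ) - 2 := by rw [Nat.cast_sub hp]; norm_num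
  have c2 : ((p i1 : ℝ) - 2) * ((p i1 - 2 - 1 : ℕ) : ℝ) = ((p i1 : ℝ) - 2) * ((p i1 : ℝ) - 3) := by
    rcases Nat.lt_or_ge (p i1) 3 with h | h
    · have : (p i1 : ℝ) = 2 := by exact_mod_cast (by omega : p i1 = 2)
      rw [this]; simp
    · rw [Nat.sub_sub, Nat.cast_sub h]; norm_num
  have c3 : ∀ j, (p j : ℝ) * ((p j - 1 : ℕ) : ℝ) = (p j : ℝ) * ((p j : ℝ) - 1) := by
    intro j
    rcases Nat.eq_zero_or_pos (p j) with h | h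
    · rw [h]; simp
    · rw [Nat.cast_sub h]; norm_num
  -- first index equal to i1
  have e1 : s i1 * ((update p i1 (p i1 - 2) i1 : ℕ) : ℝ) *
      ∑ i, s i * ((dn (update p i1 (p i1 - 2)) i1 i : ℕ) : ℝ) *
        K (dn (dn (update p i1 (p i1 - 2)) i1) i) =
      s i1 ^ 2 * ((p i1 : ℝ) - 2) * ((p i1 : ℝ) - 3) * K (update p i1 (p i1 - 4)) +
      ∑ j ∈ Finset.univ.erase i1,
                s i1 * s j * ((p i1 : ℝ) - 2) * (p j : ℝ) *
                  K (update (update p i1 (p i1 - 3)) j (p j - 1)) := by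
    rw [← Finset.add_sum_erase _ _ (Finset.mem_univ i1), mul_add, Finset.mul_sum]
    congr 1
    · simp only [dn, update_self, update_idem]
      rw [show p i1 - 2 - 1 - 1 = p i1 - 4 by omega, c1]
      linear_combination s i1 ^ 2 * K (update p i1 (p i1 - 4)) * c2
    · refine Finset.sum_congr rfl fun j hj => ?_
      have hj' := Finset.ne_of_mem_erase hj
      simp only [dn, update_self, update_idem, update_of_ne hj', c1]
      rw [show p i1 - 2 - 1 = p i1 - 3 by omega]
      ring
  have e2 : ∀ j ∈ Finset.univ.erase i1, s j * ((update p i1 (p i1 - 2) j : ℕ) : ℝ) *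
      ∑ i, s i * ((dn (update p i1 (p i1 - 2)) j i : ℕ) : ℝ) *
        K (dn (dn (update p i1 (p i1 - 2)) j) i) =
      s i1 * s j * ((p i1 : ℝ) - 2) * (p j : ℝ) *
                  K (update (update p i1 (p i1 - 3)) j (p j - 1)) +
      ((s j) ^ 2 * (p j : ℝ) * ((p j : ℝ) - 1) *
                  K (update (update p i1 (p i1 - 2)) j (p j - 2)) +
      ∑ i ∈ (Finset.univ.erase i1).erase j,
                s j * s i * (p j : ℝ) * (p i : ℝ) *
                  K (update (update (update p i1 (p i1 - 2)) j (p j - 1)) i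
                    (p i - 1))) := by
    intro j hj
    have hj' := Finset.ne_of_mem_erase hj
    rw [← Finset.add_sum_erase _ _ (Finset.mem_univ i1), ← Finset.add_sum_erase _ _ hj, mul_add,
      mul_add, Finset.mul_sum]
    congr 1
    · simp only [dn, update_self, update_of_ne hj', update_of_ne hj'.symm, c1]
      rw [update_comm hj'.symm, update_idem, show p i1 - 2 - 1 = p i1 - 3 by omega,
        update_comm hj' (p j - 1) (p i1 - 3) p]
      ring
    congr 1
    · simp only [dn, update_self, update_of_ne hj', update_idem, Nat.sub_sub]
      linear_combination s j ^ 2 * K (update (update p i1 (p i1 - 2)) j (p j - 2)) * c3 j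
    · refine Finset.sum_congr rfl fun i hi => ?_
      have hi1 := Finset.ne_of_mem_erase hi
      have hi2 := Finset.ne_of_mem_erase (Finset.mem_of_mem_erase hi)
      simp only [dn, update_of_ne hj', update_of_ne hi1, update_of_ne hi2]
      ring
  rw [← Finset.add_sum_erase _ _ (Finset.mem_univ i1), e1, Finset.sum_congr rfl e2,
    Finset.sum_add_distrib, Finset.sum_add_distrib]
  ring

def mn {n : ℕ} (q : Fin n → ℕ) (x : Fin n → ℝ) : ℝ := ∏ k, x k ^ q k

lemma mn_contDiff {n : ℕ} (q : Fin n → ℕ) : ContDiff ℝ 1 (mn q) := by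
  unfold mn
  fun_prop

lemma mn_up {n : ℕ} (q : Fin n → ℕ) (i : Fin n) (x : Fin n → ℝ) (r : ℕ) :
    mn (update q i (q i + r)) x = x i ^ r * mn q x := by
  unfold mn
  rw [← Finset.mul_prod_erase Finset.univ _ (Finset.mem_univ i),
    ← Finset.mul_prod_erase Finset.univ (fun k => x k ^ q k) (Finset.mem_univ i),
    Finset.prod_congr rfl (fun k hk => by rw [update_of_ne (Finset.ne_of_mem_erase hk)]),
    update_self, pow_add]
  ring

lemma pd_mn {n : ℕ} (q : Fin n → ℕ) (j : Fin n) (x : Fin n → ℝ) :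
    pd n (mn q) j x = q j * mn (dn q j) x := pd_mono q j x

lemma core (m : ℕ) (μ : Fin (m+1) → ℝ) (A : Matrix (Fin (m+1)) (Fin (m+1)) ℝ)
    (a : ℝ) (ha : a ≠ 0) (hT : ∀ z, (A.mulVec z + μ) 0 = a * z 0 + μ 0)
    (g G GG : ℝ → ℝ) (hG : ∀ u, G u = ∫ v in Ioi u, g v) (hGG : ∀ u, GG u = ∫ v in Ioi u, G v)
    (hgi : ∀ u, 0 < u → IntegrableOn g (Ioi u)) (hg0 : m = 0 → IntegrableOn g (Ioi 0))
    (hGi : ∀ u, 0 < u → IntegrableOn G (Ioi u)) (hG0 : m = 0 → IntegrableOn G (Ioi 0))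
    (p : Fin (m+1) → ℕ) (hp : 2 ≤ p 0)
    (Ig : ∀ q : Fin (m+1) → ℕ, (∀ k, q k ≤ p k) →
      Integrable (fun z => mn q (A.mulVec z + μ) * g (1/2 * (z ⬝ᵥ z))))
    (IG : ∀ q : Fin (m+1) → ℕ, (∀ k, q k ≤ p k) →
      Integrable (fun z => mn q (A.mulVec z + μ) * G (1/2 * (z ⬝ᵥ z))))
    (IGG : ∀ q : Fin (m+1) → ℕ, (∀ k, q k ≤ p k) →
      Integrable (fun z => mn q (A.mulVec z + μ) * GG (1/2 * (z ⬝ᵥ z)))) :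
    ∫ z, mn p (A.mulVec z + μ) * g (1/2 * (z ⬝ᵥ z)) =
      a ^ 2 * (∫ z, mn (update p 0 (p 0 - 2)) (A.mulVec z + μ) * G (1/2 * (z ⬝ᵥ z)))
      + (∑ j, (A j 0 * a) * ((update p 0 (p 0 - 2) j : ℕ) : ℝ) *
          ∑ i, (A i 0 * a) * ((dn (update p 0 (p 0 - 2)) j i : ℕ) : ℝ) *
            ∫ z, mn (dn (dn (update p 0 (p 0 - 2)) j) i) (A.mulVec z + μ) *
              GG (1/2 * (z ⬝ᵥ z)))
      + 2 * μ 0 * (∑ j, (A j 0 * a) * ((update p 0 (p 0 - 2) j : ℕ) : ℝ) *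
          ∫ z, mn (dn (update p 0 (p 0 - 2)) j) (A.mulVec z + μ) * G (1/2 * (z ⬝ᵥ z)))
      + μ 0 ^ 2 * ∫ z, mn (update p 0 (p 0 - 2)) (A.mulVec z + μ) * g (1/2 * (z ⬝ᵥ z)) := by
  set q : Fin (m+1) → ℕ := update p 0 (p 0 - 2) with hq
  have hq0 : q 0 + 2 = p 0 := by simp only [hq, update_self]; omega
  have hqk : ∀ k, k ≠ 0 → q k = p k := fun k hk => by rw [hq, update_of_ne hk]
  have hpq : p = update q 0 (q 0 + 2) := by
    rw [hq, update_idem, update_self, Nat.sub_add_cancel hp, update_eq_self]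
  -- room
  have room : ∀ r : Fin (m+1) → ℕ, (∀ k, r k ≤ q k) →
      (∀ k, r k ≤ p k) ∧ (∀ k, update r 0 (r 0 + 1) k ≤ p k) := by
    intro r hr
    constructor
    · intro k
      by_cases hk : k = 0
      · subst hk; have := hr 0; omega
      · rw [← hqk k hk]; exact hr k
    · intro k
      by_cases hk : k = 0
      · subst hk; rw [update_self]; have := hr 0; omega
      · rw [update_of_ne hk, ← hqk k hk]; exact hr k
  have dn_le : ∀ (r : Fin (m+1) → ℕ) j, ∀ k, dn r j k ≤ r k := by
    intro r j k
    unfold dn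
    by_cases hk : k = j
    · subst hk; simp
    · rw [update_of_ne hk]
  have z0 : ∀ z, z 0 = a⁻¹ * ((A.mulVec z + μ) 0 - μ 0) := by
    intro z; rw [hT]; field_simp; ring
  have zmul : ∀ (r : Fin (m+1) → ℕ) z, z 0 * mn r (A.mulVec z + μ) =
      a⁻¹ * (mn (update r 0 (r 0 + 1)) (A.mulVec z + μ) - μ 0 * mn r (A.mulVec z + μ)) := by
    intro r z
    rw [mn_up, pow_one]
    nth_rw 1 [z0 z]
    ring
  -- integrability with an extra factor
  have ext1 : ∀ (h : ℝ → ℝ), (∀ q : Fin (m+1) → ℕ, (∀ k, q k ≤ p k) →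
      Integrable (fun z => mn q (A.mulVec z + μ) * h (1/2 * (z ⬝ᵥ z)))) →
      ∀ r : Fin (m+1) → ℕ, (∀ k, r k ≤ q k) →
      Integrable (fun z => (z 0 * mn r (A.mulVec z + μ)) * h (1/2 * (z ⬝ᵥ z))) := by
    intro h hI r hr
    have := ((hI _ (room r hr).2).sub ((hI _ (room r hr).1).const_mul (μ 0))).const_mul a⁻¹
    refine this.congr (Eventually.of_forall fun z => ?_)
    simp only [Pi.sub_apply]
    rw [zmul]; ring
  let F : (Fin (m+1) → ℝ) → ℝ := fun z => mn q (A.mulVec z + μ)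
  let D : (Fin (m+1) → ℝ) → ℝ := fun z =>
    ∑ j, A j 0 * ((q j : ℝ) * mn (dn q j) (A.mulVec z + μ))
  let D2 : (Fin (m+1) → ℝ) → ℝ := fun z =>
    ∑ j, (A j 0 * (q j : ℝ)) * ∑ i, A i 0 * ((dn q j i : ℝ) * mn (dn (dn q j) i) (A.mulVec z + μ))
  have mnd : ∀ (r : Fin (m+1) → ℕ) z t, HasDerivAt (fun s => mn r (A.mulVec (update z 0 s) + μ))
      (∑ j, A j 0 * ((r j : ℝ) * mn (dn r j) (A.mulVec (update z 0 t) + μ))) t := by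
    intro r z t
    have := chain_line A μ (mn r) ((mn_contDiff r).differentiable one_ne_zero) 0 z t
    simpa only [pd_mn] using this
  have mnc : ∀ r : Fin (m+1) → ℕ, Continuous fun z => mn r (A.mulVec z + μ) := by
    intro r
    have h1 := (mn_contDiff r).continuous
    have h2 : Continuous fun z : Fin (m+1) → ℝ => A.mulVec z + μ :=
      (Continuous.matrix_mulVec continuous_const continuous_id).add continuous_const
    exact h1.comp h2
  have dF : ∀ z t, HasDerivAt (fun s => F (update z 0 s)) (D (update z 0 t)) t := mnd q
  have dD : ∀ z t, HasDerivAt (fun s => D (update z 0 s)) (D2 (update z 0 t)) t := by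
    intro z t
    have := HasDerivAt.fun_sum (u := Finset.univ) (fun j _ =>
      (mnd (dn q j) z t).const_mul (A j 0 * (q j : ℝ)))
    refine this.congr_of_eventuallyEq (Eventually.of_forall fun s => ?_)
    simp only [D]
    exact Finset.sum_congr rfl fun j _ => by ring
  have cD : Continuous D := by
    refine continuous_finsetSum _ fun j _ => ?_
    exact continuous_const.mul (continuous_const.mul (mnc _))
  have cD2 : Continuous D2 := by
    refine continuous_finsetSum _ fun j _ => continuous_const.mul ?_
    refine continuous_finsetSum _ fun i _ => ?_
    exact continuous_const.mul (continuous_const.mul (mnc _))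
  have cF : Continuous F := mnc q
  -- integrability of D-terms
  have le1 : ∀ j, ∀ k, dn q j k ≤ q k := dn_le q
  have le2 : ∀ j i, ∀ k, dn (dn q j) i k ≤ q k := fun j i k => (dn_le _ i k).trans (dn_le q j k)
  have ID : ∀ h : ℝ → ℝ, (∀ q : Fin (m+1) → ℕ, (∀ k, q k ≤ p k) →
      Integrable (fun z => mn q (A.mulVec z + μ) * h (1/2 * (z ⬝ᵥ z)))) →
      Integrable (fun z => D z * h (1/2 * (z ⬝ᵥ z))) ∧
      Integrable (fun z => (z 0 * D z) * h (1/2 * (z ⬝ᵥ z))) ∧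
      ∫ z, D z * h (1/2 * (z ⬝ᵥ z)) = ∑ j, A j 0 * (q j : ℝ) *
        ∫ z, mn (dn q j) (A.mulVec z + μ) * h (1/2 * (z ⬝ᵥ z)) := by
    intro h hI
    have a1 : ∀ j ∈ (Finset.univ : Finset (Fin (m+1))), Integrable (fun z => A j 0 * (q j : ℝ) *
        (mn (dn q j) (A.mulVec z + μ) * h (1/2 * (z ⬝ᵥ z)))) := fun j _ =>
      (hI _ (room _ (le1 j)).1).const_mul _
    have a2 : ∀ j ∈ (Finset.univ : Finset (Fin (m+1))), Integrable (fun z => A j 0 * (q j : ℝ) *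
        ((z 0 * mn (dn q j) (A.mulVec z + μ)) * h (1/2 * (z ⬝ᵥ z)))) := fun j _ =>
      (ext1 h hI _ (le1 j)).const_mul _
    have e1 : (fun z => D z * h (1/2 * (z ⬝ᵥ z))) = fun z => ∑ j, A j 0 * (q j : ℝ) *
        (mn (dn q j) (A.mulVec z + μ) * h (1/2 * (z ⬝ᵥ z))) := by
      funext z
      simp only [D, Finset.sum_mul]
      exact Finset.sum_congr rfl fun j _ => by ring
    have e2 : (fun z => (z 0 * D z) * h (1/2 * (z ⬝ᵥ z))) = fun z => ∑ j, A j 0 * (q j : ℝ) *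
        ((z 0 * mn (dn q j) (A.mulVec z + μ)) * h (1/2 * (z ⬝ᵥ z))) := by
      funext z
      simp only [D, Finset.sum_mul, Finset.mul_sum]
      exact Finset.sum_congr rfl fun j _ => by ring
    refine ⟨?_, ?_, ?_⟩
    · rw [e1]; exact integrable_finsetSum _ a1
    · rw [e2]; exact integrable_finsetSum _ a2
    · rw [e1, integral_finsetSum _ a1]
      exact Finset.sum_congr rfl fun j _ => integral_const_mul _ _
  have ID2 : Integrable (fun z => D2 z * GG (1/2 * (z ⬝ᵥ z))) ∧
      ∫ z, D2 z * GG (1/2 * (z ⬝ᵥ z)) = ∑ j, (A j 0 * (q j : ℝ)) * ∑ i, A i 0 * (dn q j i : ℝ) *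
        ∫ z, mn (dn (dn q j) i) (A.mulVec z + μ) * GG (1/2 * (z ⬝ᵥ z)) := by
    have a1 : ∀ j, ∀ i ∈ (Finset.univ : Finset (Fin (m+1))),
        Integrable (fun z => A i 0 * (dn q j i : ℝ) *
        (mn (dn (dn q j) i) (A.mulVec z + μ) * GG (1/2 * (z ⬝ᵥ z)))) := fun j i _ =>
      (IGG _ (room _ (le2 j i)).1).const_mul _
    have a2 : ∀ j ∈ (Finset.univ : Finset (Fin (m+1))),
        Integrable (fun z => (A j 0 * (q j : ℝ)) * ∑ i, A i 0 * (dn q j i : ℝ) *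
        (mn (dn (dn q j) i) (A.mulVec z + μ) * GG (1/2 * (z ⬝ᵥ z)))) := fun j _ =>
      (integrable_finsetSum _ (a1 j)).const_mul _
    have e1 : (fun z => D2 z * GG (1/2 * (z ⬝ᵥ z))) = fun z => ∑ j, (A j 0 * (q j : ℝ)) *
        ∑ i, A i 0 * (dn q j i : ℝ) *
        (mn (dn (dn q j) i) (A.mulVec z + μ) * GG (1/2 * (z ⬝ᵥ z))) := by
      funext z
      simp only [D2, Finset.sum_mul, Finset.mul_sum]
      exact Finset.sum_congr rfl fun j _ => Finset.sum_congr rfl fun i _ => by ring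
    refine ⟨?_, ?_⟩
    · rw [e1]; exact integrable_finsetSum _ a2
    · rw [e1, integral_finsetSum _ a2]
      refine Finset.sum_congr rfl fun j _ => ?_
      rw [integral_const_mul, integral_finsetSum _ (a1 j)]
      congr 1
      exact Finset.sum_congr rfl fun i _ => integral_const_mul _ _
  have qle : ∀ k, q k ≤ q k := fun k => le_rfl
  have IFg := Ig q (room q qle).1
  have IFG := IG q (room q qle).1
  have IzFg := ext1 g Ig q qle
  have IzFG := ext1 G IG q qle
  obtain ⟨IDG, IzDG, eDG⟩ := ID G IG
  obtain ⟨IDGG, -, -⟩ := ID GG IGG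
  have hp_eq : ∀ z, mn p (A.mulVec z + μ) = (a * z 0 + μ 0) ^ 2 * F z := by
    intro z
    rw [← hT, hpq, mn_up]
  have IzzFg : Integrable (fun z => (z 0 * F z) * (z 0 * g (1/2 * (z ⬝ᵥ z)))) := by
    have := (((Ig p fun k => le_rfl).sub (IzFg.const_mul (2 * a * μ 0))).sub
      (IFg.const_mul (μ 0 ^ 2))).const_mul ((a^2)⁻¹)
    refine this.congr (Eventually.of_forall fun z => ?_)
    simp only [Pi.sub_apply, hp_eq, F]
    field_simp
    ring
  -- the three applications
  have s1 := stein m g G hG hgi hg0 (fun z => z 0 * F z) (fun z => F z + z 0 * D z)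
    (fun z t => by
      have := (hasDerivAt_id t).mul (dF z t)
      refine (this.congr_of_eventuallyEq (Eventually.of_forall fun s => ?_)).congr_deriv ?_
      · simp
      · simp)
    (cF.add ((continuous_apply 0).mul cD)) IzFG
    ((IFG.add IzDG).congr (Eventually.of_forall fun z => by
      simp only [Pi.add_apply, F]; ring)) IzzFg
  have s2 := stein m g G hG hgi hg0 F D dF cD IFG IDG
    (IzFg.congr (Eventually.of_forall fun z => by simp only [F]; ring))
  have s3 := stein m G GG hGG hGi hG0 D D2 dD cD2 IDGG ID2.1
    (IzDG.congr (Eventually.of_forall fun z => by simp only; ring))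
  have s1' : ∫ z, (F z + z 0 * D z) * G (1/2 * (z ⬝ᵥ z)) =
      (∫ z, F z * G (1/2 * (z ⬝ᵥ z))) + ∫ z, D z * (z 0 * G (1/2 * (z ⬝ᵥ z))) := by
    rw [← integral_add IFG (IzDG.congr (Eventually.of_forall fun z => by simp only; ring))]
    exact integral_congr_ae (Eventually.of_forall fun z => by simp only [F]; ring)
  have tot : ∫ z, mn p (A.mulVec z + μ) * g (1/2 * (z ⬝ᵥ z)) =
      a ^ 2 * (∫ z, (z 0 * F z) * (z 0 * g (1/2 * (z ⬝ᵥ z)))) +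
      2 * μ 0 * a * (∫ z, F z * (z 0 * g (1/2 * (z ⬝ᵥ z)))) +
      μ 0 ^ 2 * ∫ z, F z * g (1/2 * (z ⬝ᵥ z)) := by
    have i2 : Integrable (fun z => F z * (z 0 * g (1/2 * (z ⬝ᵥ z)))) :=
      IzFg.congr (Eventually.of_forall fun z => by simp only [F]; ring)
    have i12 : Integrable (fun z => a ^ 2 * ((z 0 * F z) * (z 0 * g (1/2 * (z ⬝ᵥ z)))) +
        2 * μ 0 * a * (F z * (z 0 * g (1/2 * (z ⬝ᵥ z))))) :=
      (IzzFg.const_mul _).add (i2.const_mul _)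
    have i3 : Integrable (fun z => μ 0 ^ 2 * (F z * g (1/2 * (z ⬝ᵥ z)))) := IFg.const_mul _
    rw [← integral_const_mul, ← integral_const_mul, ← integral_const_mul,
      ← integral_add (IzzFg.const_mul _) (i2.const_mul _), ← integral_add i12 i3]
    exact integral_congr_ae (Eventually.of_forall fun z => by simp only [hp_eq]; ring)
  rw [tot, ← s1, s1', ← s3, ← s2, ID2.2, eDG]
  have f1 : a ^ 2 * ∑ j, (A j 0 * (q j : ℝ)) * ∑ i, A i 0 * (dn q j i : ℝ) *
        (∫ z, mn (dn (dn q j) i) (A.mulVec z + μ) * GG (1/2 * (z ⬝ᵥ z))) =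
      ∑ j, (A j 0 * a) * (q j : ℝ) * ∑ i, (A i 0 * a) * (dn q j i : ℝ) *
        ∫ z, mn (dn (dn q j) i) (A.mulVec z + μ) * GG (1/2 * (z ⬝ᵥ z)) := by
    simp only [Finset.mul_sum]
    exact Finset.sum_congr rfl fun j _ => Finset.sum_congr rfl fun i _ => by ring
  have f2 : a * ∑ j, A j 0 * (q j : ℝ) *
        (∫ z, mn (dn q j) (A.mulVec z + μ) * G (1/2 * (z ⬝ᵥ z))) =
      ∑ j, (A j 0 * a) * (q j : ℝ) *
        ∫ z, mn (dn q j) (A.mulVec z + μ) * G (1/2 * (z ⬝ᵥ z)) := by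
    simp only [Finset.mul_sum]
    exact Finset.sum_congr rfl fun j _ => by ring
  rw [← f1, ← f2]
  simp only [F]
  ring

/-- Corollary 1: product-moment recursion for `X ~ E_n(μ, Σ, g_n)`, `X* ~ E_n(μ, Σ, Ḡ_n)`,
`X** ~ E_n(μ, Σ, 𝒢̄_n)` and nonnegative integers `p₁,…,p_n` with `p₁ ≥ 2` such that all the
expectations appearing below exist and the regularity conditions of Theorem 1 hold for
`f(x) = x₁^(p₁-2) ∏_{k=2}^n x_k^(p_k)`. -/
theorem stmt_2 (n : ℕ) (hn : 0 < n) (i1 : Fin n) (hi1 : i1 = ⟨0, hn⟩)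
    (μ : Fin n → ℝ) (S : Matrix (Fin n) (Fin n) ℝ) (hS : S.PosDef)
    (g G GG : ℝ → ℝ)
    (hg0 : ∀ t, 0 ≤ g t) (hgm : Measurable g)
    (hg_int : IntegrableOn (fun t : ℝ => t ^ ((n : ℝ) / 2 - 1) * g t) (Ioi 0))
    (hg_pos : 0 < ∫ t in Ioi (0 : ℝ), t ^ ((n : ℝ) / 2 - 1) * g t)
    (hG : ∀ u : ℝ, G u = ∫ v in Ioi u, g v)
    (hG_int : IntegrableOn (fun t : ℝ => t ^ ((n : ℝ) / 2 - 1) * G t) (Ioi 0))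
    (hG_pos : 0 < ∫ t in Ioi (0 : ℝ), t ^ ((n : ℝ) / 2 - 1) * G t)
    (hGG : ∀ u : ℝ, GG u = ∫ v in Ioi u, G v)
    (hGG_int : IntegrableOn (fun t : ℝ => t ^ ((n : ℝ) / 2 - 1) * GG t) (Ioi 0))
    (hGG_pos : 0 < ∫ t in Ioi (0 : ℝ), t ^ ((n : ℝ) / 2 - 1) * GG t)
    (p : Fin n → ℕ) (hp : 2 ≤ p i1)
    -- the function f of Theorem 1
    (f : (Fin n → ℝ) → ℝ)
    (hfdef : f = fun x => (x i1) ^ (p i1 - 2) * ∏ k ∈ Finset.univ.erase i1, (x k) ^ p k)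
    -- all the expectations appearing below exist
    (hEx_g : ∀ q : Fin n → ℕ, (∀ k, q k ≤ p k) →
      Integrable (fun x : Fin n → ℝ => (∏ k : Fin n, (x k) ^ q k) * ePdf n μ S g x))
    (hEx_G : ∀ q : Fin n → ℕ, (∀ k, q k ≤ p k) →
      Integrable (fun x : Fin n → ℝ => (∏ k : Fin n, (x k) ^ q k) * ePdf n μ S G x))
    (hEx_GG : ∀ q : Fin n → ℕ, (∀ k, q k ≤ p k) →
      Integrable (fun x : Fin n → ℝ => (∏ k : Fin n, (x k) ^ q k) * ePdf n μ S GG x))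
    -- the regularity conditions of Theorem 1 for f
    (A : Matrix (Fin n) (Fin n) ℝ) (hA_low : ∀ i j : Fin n, i < j → A i j = 0)
    (hA : A * Aᵀ = S)
    (hint1 : ∀ i j : Fin n,
      Integrable (fun x : Fin n → ℝ => pd2 n f i j x * ePdf n μ S GG x))
    (hint2 : ∀ i : Fin n, Integrable (fun x : Fin n → ℝ => pd n f i x * ePdf n μ S G x))
    (hlim1 : ∀ x : Fin n → ℝ, Tendsto
      (fun t : ℝ => t * f (A.mulVec (update x i1 t) + μ) *
        G (1 / 2 * (update x i1 t ⬝ᵥ update x i1 t)))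
      (cocompact ℝ) (nhds 0))
    (hlim2 : ∀ x : Fin n → ℝ, Tendsto
      (fun t : ℝ => pd n f i1 (A.mulVec (update x i1 t) + μ) *
        GG (1 / 2 * (update x i1 t ⬝ᵥ update x i1 t)))
      (cocompact ℝ) (nhds 0)) :
    eMom n μ S g p =
      (normConst n g / normConst n G) * S i1 i1 * eMom n μ S G (update p i1 (p i1 - 2))
      + (normConst n g / normConst n GG) *
          (S i1 i1 ^ 2 * ((p i1 : ℝ) - 2) * ((p i1 : ℝ) - 3) *
              eMom n μ S GG (update p i1 (p i1 - 4))
            + 2 * ∑ j ∈ Finset.univ.erase i1,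
                S i1 i1 * S j i1 * ((p i1 : ℝ) - 2) * (p j : ℝ) *
                  eMom n μ S GG (update (update p i1 (p i1 - 3)) j (p j - 1))
            + ∑ j ∈ Finset.univ.erase i1,
                (S j i1) ^ 2 * (p j : ℝ) * ((p j : ℝ) - 1) *
                  eMom n μ S GG (update (update p i1 (p i1 - 2)) j (p j - 2))
            + ∑ j ∈ Finset.univ.erase i1, ∑ i ∈ (Finset.univ.erase i1).erase j,
                S j i1 * S i i1 * (p j : ℝ) * (p i : ℝ) *
                  eMom n μ S GG (update (update (update p i1 (p i1 - 2)) j (p j - 1)) i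
                    (p i - 1)))
      + 2 * (normConst n g / normConst n G) * μ i1 *
          (S i1 i1 * ((p i1 : ℝ) - 2) * eMom n μ S G (update p i1 (p i1 - 3))
            + ∑ j ∈ Finset.univ.erase i1,
                S j i1 * (p j : ℝ) *
                  eMom n μ S G (update (update p i1 (p i1 - 2)) j (p j - 1)))
      + (μ i1) ^ 2 * eMom n μ S g (update p i1 (p i1 - 2)) := by
  obtain ⟨m, rfl⟩ : ∃ m, n = m + 1 := ⟨n - 1, by omega⟩
  have hi0 : i1 = 0 := hi1
  clear hlim1 hlim2 hint1 hint2 hfdef hi1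
  subst hi0
  have cg := (normConst_pos (m+1) hn g hg_pos).ne'
  have cG := (normConst_pos (m+1) hn G hG_pos).ne'
  have cGG := (normConst_pos (m+1) hn GG hGG_pos).ne'
  have hd : √S.det ≠ 0 := (Real.sqrt_pos.2 hS.det_pos).ne'
  have hA0 : ∀ j, j ≠ 0 → A 0 j = 0 := fun j hj => hA_low 0 j (Fin.pos_iff_ne_zero.2 hj)
  have hrow : ∀ v : Fin (m+1) → ℝ, ∑ j, A 0 j * v j = A 0 0 * v 0 := fun v => by
    rw [Finset.sum_eq_single 0 (fun j _ hj => by rw [hA0 j hj, zero_mul]) (by simp)]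
  have hS0 : ∀ j, S j 0 = A j 0 * A 0 0 := fun j => by
    rw [← hA, Matrix.mul_apply]
    simp only [transpose_apply]
    rw [Finset.sum_eq_single 0 (fun k _ hk => by rw [hA0 k hk, mul_zero]) (by simp)]
  have ha : A 0 0 ≠ 0 := fun h => by
    have h1 := hS0 0
    rw [h, mul_zero] at h1
    exact (hS.diag_pos (i := 0)).ne' h1
  have hT : ∀ z, (A.mulVec z + μ) 0 = A 0 0 * z 0 + μ 0 := fun z => by
    rw [Pi.add_apply, mulVec, dotProduct, hrow]
  have hpdf : ∀ (h : ℝ → ℝ) z, ePdf (m+1) μ S h (A.mulVec z + μ) =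
      normConst (m+1) h / √S.det * h (1/2 * (z ⬝ᵥ z)) := fun h z => by
    rw [ePdf, quad A S μ hS hA]
  have hI : ∀ h : ℝ → ℝ, normConst (m+1) h ≠ 0 → (∀ q : Fin (m+1) → ℕ, (∀ k, q k ≤ p k) →
      Integrable (fun x : Fin (m+1) → ℝ => (∏ k, (x k) ^ q k) * ePdf (m+1) μ S h x)) →
      ∀ q : Fin (m+1) → ℕ, (∀ k, q k ≤ p k) →
      Integrable (fun z => mn q (A.mulVec z + μ) * h (1/2 * (z ⬝ᵥ z))) := by
    intro h hc hx q hq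
    have := ((cov_integrable A S μ hS hA _).1 (hx q hq)).const_mul (√S.det / normConst (m+1) h)
    refine this.congr (Eventually.of_forall fun z => ?_)
    simp only [hpdf, mn]
    field_simp
  have hE : ∀ (h : ℝ → ℝ) (q : Fin (m+1) → ℕ), eMom (m+1) μ S h q = normConst (m+1) h *
      ∫ z, mn q (A.mulVec z + μ) * h (1/2 * (z ⬝ᵥ z)) := by
    intro h q
    rw [eMom, cov_integral A S μ hS hA, ← integral_const_mul, ← integral_const_mul]
    refine integral_congr_ae (Eventually.of_forall fun z => ?_)
    simp only [hpdf, mn]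
    field_simp
  obtain ⟨hgi, hg1⟩ := gen_reg (m+1) g G hg_int hG hG_pos
  obtain ⟨hGi, hG1⟩ := gen_reg (m+1) G GG hG_int hGG hGG_pos
  have key := core m μ A (A 0 0) ha hT g G GG hG hGG hgi (fun h => hg1 (by omega)) hGi
    (fun h => hG1 (by omega)) p hp (hI g cg hEx_g) (hI G cG hEx_G) (hI GG cGG hEx_GG)
  simp only [← hS0] at key
  have hsq : A 0 0 ^ 2 = S 0 0 := by rw [hS0]; ring
  have k2' := comb2 0 p hp (fun j => S j 0) (fun r => eMom (m+1) μ S GG r)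
  have k1' := comb1 0 p hp (fun j => S j 0) (fun r => eMom (m+1) μ S G r)
  simp only at k1' k2'
  rw [← k1', ← k2', hE g p, key, hsq]
  simp only [hE]
  have pull : ∀ (c x y w : ℝ), x * y * (c * w) = c * (x * y * w) := fun c x y w => by ring
  have pull2 : ∀ (c x y : ℝ), x * (c * y) = c * (x * y) := fun c x y => by ring
  simp only [pull (normConst (m+1) G), pull (normConst (m+1) GG), ← Finset.mul_sum]
  simp only [pull2 (normConst (m+1) GG), ← Finset.mul_sum]
  field_simp
end

section
/- Let X be an n-dimensional multivariate normal random vector with mean μ = (μ₁,…,μ_n)ᵀ and positive definite covariance matrix Σ = (σ_{ij}), and let f : ℝⁿ → ℝ be twice continuously differentiable such that all expectations below are finite and lim_{|x₁|→∞} x₁ f(Ax+μ) exp(−xᵀx/2) = 0 and lim_{|x₁|→∞} (∇₁f)(Ax+μ) exp(−xᵀx/2) = 0, where A is the Cholesky factor of Σ. Then E[X₁² f(X)] = Σ_{i=1}^n Σ_{j=1}^n σ_{1i} σ_{1j} E[∇_{i,j} f(X)] + 2μ₁ Σ_{i=1}^n σ_{1i} E[∇_i f(X)] + σ₁₁ E[f(X)]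 + μ₁² E[f(X)]. -/
open MeasureTheory Real Set Filter Matrix

/-- The density of the multivariate normal `N_n(μ, Σ)` with positive definite `Σ`:
`(2π)^(-n/2) |Σ|^(-1/2) exp(-(x-μ)ᵀΣ⁻¹(x-μ)/2)`. -/
noncomputable def normalPdf (n : ℕ) (μ : Fin n → ℝ) (S : Matrix (Fin n) (Fin n) ℝ)
    (x : Fin n → ℝ) : ℝ :=
  (2 * π) ^ (-(n : ℝ) / 2) * (Real.sqrt S.det)⁻¹ *
    Real.exp (-(1 / 2) * ((x - μ) ⬝ᵥ S⁻¹.mulVec (x - μ)))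

/-- The integral of a line derivative vanishes. -/
lemma aux_int_zero {n : ℕ} {K K' : (Fin n → ℝ) → ℝ} {v : Fin n → ℝ}
    (hK : Integrable K) (hK' : Integrable K')
    (h : ∀ x, HasLineDerivAt ℝ K (K' x) x v) : ∫ x, K' x = 0 := by
  have := integral_bilinear_hasLineDerivAt_right_eq_neg_left_of_integrable
    (μ := (volume : Measure (Fin n → ℝ))) (f := K) (f' := K') (g := fun _ => (1 : ℝ))
    (g' := fun _ => (0 : ℝ)) (v := v) (B := ContinuousLinearMap.mul ℝ ℝ)
    (by simpa using hK') (by simp) (by simpa using hK) (fun x _ => h x)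
    (fun x _ => by simpa [HasLineDerivAt] using hasDerivAt_const (0 : ℝ) (1 : ℝ))
  simpa using this

lemma aux_quad {n : ℕ} (S : Matrix (Fin n) (Fin n) ℝ) (hS : S.PosDef) (i : Fin n)
    (y : Fin n → ℝ) (t : ℝ) :
    (y + t • S i) ⬝ᵥ S⁻¹.mulVec (y + t • S i) =
      y ⬝ᵥ S⁻¹.mulVec y + 2 * t * y i + t ^ 2 * S i i := by
  have hdet : IsUnit S.det := hS.det_pos.ne'.isUnit
  have hsymm : Sᵀ = S := by
    have := hS.isHermitian.eq
    rwa [Matrix.conjTranspose_eq_transpose_of_trivial] at this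
  have h1 : S⁻¹.mulVec (S i) = Pi.single i 1 := by
    have : S i = S.mulVec (Pi.single i 1) := by
      ext j
      rw [Matrix.mulVec_single_one]
      change Sᵀ j i = S j i
      rw [hsymm]
    rw [this, Matrix.mulVec_mulVec, Matrix.nonsing_inv_mul _ hdet, Matrix.one_mulVec]
  have h2 : S i ⬝ᵥ S⁻¹.mulVec y = y i := by
    rw [Matrix.dotProduct_mulVec, ← Matrix.mulVec_transpose, Matrix.transpose_nonsing_inv, hsymm,
      h1, single_one_dotProduct]
  rw [Matrix.mulVec_add, Matrix.mulVec_smul, h1]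
  simp only [add_dotProduct, dotProduct_add, smul_dotProduct, dotProduct_smul, h2,
    dotProduct_single_one, smul_eq_mul]
  change y ⬝ᵥ S⁻¹.mulVec y + t * y i + t * (y i + t * S i i) = _
  ring

lemma aux_pdf {n : ℕ} (μ : Fin n → ℝ) (S : Matrix (Fin n) (Fin n) ℝ) (hS : S.PosDef) (i : Fin n)
    (x : Fin n → ℝ) :
    HasLineDerivAt ℝ (normalPdf n μ S) (-(x i - μ i) * normalPdf n μ S x) x (S i) := by
  have e : (fun t : ℝ => normalPdf n μ S (x + t • S i)) = fun t : ℝ =>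
      (2 * π) ^ (-(n : ℝ) / 2) * (Real.sqrt S.det)⁻¹ *
      Real.exp (-(1 / 2) * ((x - μ) ⬝ᵥ S⁻¹.mulVec (x - μ) + 2 * t * (x - μ) i
        + t ^ 2 * S i i)) := by
    funext t
    rw [← aux_quad S hS i (x - μ) t, normalPdf]
    have : x + t • S i - μ = x - μ + t • S i := by abel
    rw [this]
  unfold HasLineDerivAt
  rw [e]
  have hq : HasDerivAt (fun t : ℝ => -(1 / 2) * ((x - μ) ⬝ᵥ S⁻¹.mulVec (x - μ)
      + 2 * t * (x - μ) i + t ^ 2 * S i i)) (-(x i - μ i)) 0 := by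
    have h1 : HasDerivAt (fun t : ℝ => 2 * t * (x - μ) i) (2 * 1 * (x - μ) i) 0 :=
      ((hasDerivAt_id (0 : ℝ)).const_mul 2).mul_const _
    have h2 : HasDerivAt (fun t : ℝ => t ^ 2 * S i i) (2 * (0 : ℝ) ^ 1 * 1 * S i i) 0 :=
      ((hasDerivAt_id (0 : ℝ)).pow 2).mul_const _
    have h3 := (((hasDerivAt_const (0 : ℝ) ((x - μ) ⬝ᵥ S⁻¹.mulVec (x - μ))).add h1).add
      h2).const_mul (-(1 / 2) : ℝ)
    refine h3.congr_deriv ?_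
    simp
  refine (hq.exp.const_mul _).congr_deriv ?_
  simp [normalPdf]
  ring

lemma aux_line {n : ℕ} {f : (Fin n → ℝ) → ℝ} {x : Fin n → ℝ} (hf : DifferentiableAt ℝ f x)
    (v : Fin n → ℝ) : HasLineDerivAt ℝ f (∑ i, v i * pd n f i x) x v := by
  have h := hf.hasFDerivAt.hasLineDerivAt v
  refine HasDerivAt.congr_deriv h ?_
  have hv : fderiv ℝ f x v = fderiv ℝ f x (∑ i, (v i) • Pi.single (M := fun _ ↦ ℝ) i 1) :=
    congrArg _ (pi_eq_sum_univ' v)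
  rw [hv]
  simp [pd, -Finset.sum_apply]

lemma aux_line_mul {n : ℕ} {f g : (Fin n → ℝ) → ℝ} {a b : ℝ} {x v : Fin n → ℝ}
    (hf : HasLineDerivAt ℝ f a x v) (hg : HasLineDerivAt ℝ g b x v) :
    HasLineDerivAt ℝ (fun y => f y * g y) (a * g x + f x * b) x v := by
  have := HasDerivAt.fun_mul hf hg
  refine HasDerivAt.congr_deriv this ?_
  simp

/-- Let `X ~ N_n(μ, Σ)` with positive definite `Σ`, and let `f : ℝⁿ → ℝ` be twice continuously
differentiable such that all expectations below are finite and
`lim_{|x₁|→∞} x₁ f(Ax+μ) exp(-xᵀx/2) = 0` and `lim_{|x₁|→∞} (∇₁f)(Ax+μ) exp(-xᵀx/2) = 0`,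
where `A` is the Cholesky factor of `Σ`. Then
`E[X₁² f(X)] = Σᵢⱼ σ_{1i}σ_{1j} E[∇_{i,j}f(X)] + 2μ₁ Σᵢ σ_{1i} E[∇_i f(X)]
  + σ₁₁ E[f(X)] + μ₁² E[f(X)]`. -/
theorem stmt_7 (n : ℕ) (hn : 0 < n) (i1 : Fin n) (hi1 : i1 = ⟨0, hn⟩)
    (μ : Fin n → ℝ) (S : Matrix (Fin n) (Fin n) ℝ) (hS : S.PosDef)
    (A : Matrix (Fin n) (Fin n) ℝ) (hA_low : ∀ i j : Fin n, i < j → A i j = 0)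
    (hA : A * Aᵀ = S)
    (f : (Fin n → ℝ) → ℝ) (hf : ContDiff ℝ 2 f)
    (hint0 : Integrable (fun x : Fin n → ℝ => (x i1) ^ 2 * f x * normalPdf n μ S x))
    (hint1 : ∀ i j : Fin n,
      Integrable (fun x : Fin n → ℝ => pd2 n f i j x * normalPdf n μ S x))
    (hint2 : ∀ i : Fin n, Integrable (fun x : Fin n → ℝ => pd n f i x * normalPdf n μ S x))
    (hint3 : Integrable (fun x : Fin n → ℝ => f x * normalPdf n μ S x))
    (hlim1 : ∀ x : Fin n → ℝ, Tendsto
      (fun t : ℝ => t * f (A.mulVec (Function.update x i1 t) + μ) *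
        Real.exp (-(Function.update x i1 t ⬝ᵥ Function.update x i1 t) / 2))
      (cocompact ℝ) (nhds 0))
    (hlim2 : ∀ x : Fin n → ℝ, Tendsto
      (fun t : ℝ => pd n f i1 (A.mulVec (Function.update x i1 t) + μ) *
        Real.exp (-(Function.update x i1 t ⬝ᵥ Function.update x i1 t) / 2))
      (cocompact ℝ) (nhds 0)) :
    ∫ x : Fin n → ℝ, (x i1) ^ 2 * f x * normalPdf n μ S x =
      (∑ i : Fin n, ∑ j : Fin n,
        S i1 i * S i1 j * ∫ x : Fin n → ℝ, pd2 n f i j x * normalPdf n μ S x)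
      + 2 * μ i1 * (∑ i : Fin n, S i1 i * ∫ x : Fin n → ℝ, pd n f i x * normalPdf n μ S x)
      + S i1 i1 * (∫ x : Fin n → ℝ, f x * normalPdf n μ S x)
      + (μ i1) ^ 2 * ∫ x : Fin n → ℝ, f x * normalPdf n μ S x := by
  clear hlim1 hlim2 hA hA_low hi1
  set p := normalPdf n μ S with hp
  have hpd : ∀ j, ContDiff ℝ 1 (fun y => pd n f j y) := fun j =>
    (hf.fderiv_right (m := 1) (by norm_num)).clm_apply contDiff_const
  set D : (Fin n → ℝ) → ℝ := fun x => ∑ j, S i1 j * pd n f j x with hD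
  set D2 : (Fin n → ℝ) → ℝ := fun x => ∑ i, ∑ j, S i1 i * S i1 j * pd2 n f i j x with hD2
  have hfc : Continuous f := hf.continuous
  have hpc : Continuous p := by
    rw [hp]
    unfold normalPdf
    fun_prop
  have lf : ∀ x, HasLineDerivAt ℝ f (D x) x (S i1) := fun x =>
    aux_line (hf.differentiable (by norm_num) x) _
  have lD : ∀ x, HasLineDerivAt ℝ D (D2 x) x (S i1) := fun x => by
    have hd : DifferentiableAt ℝ D x := by
      rw [hD]
      exact DifferentiableAt.fun_sum fun j _ =>
        (((hpd j).differentiable (by norm_num)) x).const_mul _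
    have h1 : ∀ j, HasLineDerivAt ℝ (fun y => pd n f j y)
        (∑ i, S i1 i * pd2 n f i j x) x (S i1) := fun j =>
      aux_line (((hpd j).differentiable (by norm_num)) x) _
    have h2 : HasDerivAt (fun t : ℝ => ∑ j, S i1 j * pd n f j (x + t • S i1))
        (∑ j, S i1 j * ∑ i, S i1 i * pd2 n f i j x) 0 :=
      HasDerivAt.fun_sum fun j _ => HasDerivAt.const_mul (S i1 j) (h1 j)
    have h3 : ∑ j, S i1 j * ∑ i, S i1 i * pd2 n f i j x = D2 x := by
      simp only [hD2, Finset.mul_sum]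
      rw [Finset.sum_comm]
      refine Finset.sum_congr rfl fun i _ => Finset.sum_congr rfl fun j _ => by ring
    exact h2.congr_deriv h3
  have lx : ∀ x : Fin n → ℝ, HasLineDerivAt ℝ (fun y : Fin n → ℝ => y i1 - μ i1)
      (S i1 i1) x (S i1) := fun x => by
    have := ((hasDerivAt_id (0 : ℝ)).mul_const (S i1 i1)).const_add (x i1) |>.sub_const (μ i1)
    simpa [HasLineDerivAt] using this
  have lp : ∀ x, HasLineDerivAt ℝ p (-(x i1 - μ i1) * p x) x (S i1) := aux_pdf μ S hS i1
  -- integrability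
  have iD : Integrable (fun x => D x * p x) := by
    have : (fun x => D x * p x) = fun x => ∑ j, S i1 j * (pd n f j x * p x) := by
      funext x
      simp only [hD, Finset.sum_mul, mul_assoc]
    rw [this]
    exact integrable_finsetSum _ fun j _ => (hint2 j).const_mul _
  have iD2 : Integrable (fun x => D2 x * p x) := by
    have : (fun x => D2 x * p x) = fun x => ∑ i, ∑ j, S i1 i * S i1 j * (pd2 n f i j x * p x) := by
      funext x
      simp only [hD2, Finset.sum_mul, mul_assoc]
    rw [this]
    exact integrable_finsetSum _ fun i _ => integrable_finsetSum _ fun j _ =>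
      (hint1 i j).const_mul _
  have eD : ∫ x, D x * p x = ∑ j, S i1 j * ∫ x, pd n f j x * p x := by
    have : (fun x => D x * p x) = fun x => ∑ j, S i1 j * (pd n f j x * p x) := by
      funext x
      simp only [hD, Finset.sum_mul, mul_assoc]
    rw [this, integral_finsetSum _ fun j _ => (hint2 j).const_mul _]
    simp only [integral_const_mul]
  have eD2 : ∫ x, D2 x * p x = ∑ i, ∑ j, S i1 i * S i1 j * ∫ x, pd2 n f i j x * p x := by
    have : (fun x => D2 x * p x) = fun x => ∑ i, ∑ j, S i1 i * S i1 j * (pd2 n f i j x * p x) := by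
      funext x
      simp only [hD2, Finset.sum_mul, mul_assoc]
    rw [this, integral_finsetSum _ fun i _ => integrable_finsetSum _ fun j _ =>
      (hint1 i j).const_mul _]
    refine Finset.sum_congr rfl fun i _ => ?_
    rw [integral_finsetSum _ fun j _ => (hint1 i j).const_mul _]
    simp only [integral_const_mul]
  have ix : Integrable (fun x : Fin n → ℝ => x i1 * (f x * p x)) := by
    refine (hint0.norm.add hint3.norm).mono' (by fun_prop) (ae_of_all _ fun x => ?_)
    simp only [Pi.add_apply, norm_mul, Real.norm_eq_abs, abs_pow, sq_abs]
    have h0 : 0 ≤ |f x| * |p x| := by positivity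
    have h1 : |x i1| ≤ x i1 ^ 2 + 1 := by
      nlinarith [sq_nonneg (|x i1| - 1), sq_abs (x i1), abs_nonneg (x i1)]
    nlinarith [mul_le_mul_of_nonneg_right h1 h0]
  have ixc : Integrable (fun x : Fin n → ℝ => (x i1 - μ i1) * (f x * p x)) := by
    refine (ix.sub (hint3.const_mul (μ i1))).congr (ae_of_all _ fun x => ?_)
    simp only [Pi.sub_apply]
    ring
  have ixc2 : Integrable (fun x : Fin n → ℝ => (x i1 - μ i1) ^ 2 * (f x * p x)) := by
    refine ((hint0.sub (ix.const_mul (2 * μ i1))).add (hint3.const_mul (μ i1 ^ 2))).congr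
      (ae_of_all _ fun x => ?_)
    simp only [Pi.sub_apply, Pi.add_apply]
    ring
  -- first order
  have z1 : ∫ x, (D x * p x - (x i1 - μ i1) * (f x * p x)) = 0 := by
    refine aux_int_zero hint3 (iD.sub ixc) (v := S i1) fun x => ?_
    have := aux_line_mul (lf x) (lp x)
    convert this using 1
    ring
  -- second order
  have z2 : ∫ x, (S i1 i1 * (f x * p x) + D2 x * p x - (x i1 - μ i1) ^ 2 * (f x * p x)) = 0 := by
    refine aux_int_zero (ixc.add iD) (((hint3.const_mul _).add iD2).sub ixc2) (v := S i1)
      fun x => ?_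
    have h1 := aux_line_mul (lx x) (aux_line_mul (lf x) (lp x))
    have h2 := aux_line_mul (lD x) (lp x)
    have h3 := HasDerivAt.add h1 h2
    refine HasDerivAt.congr_deriv h3 ?_
    ring
  rw [integral_sub iD ixc] at z1
  have i3 : Integrable (fun x => S i1 i1 * (f x * p x)) := hint3.const_mul _
  have i4 : Integrable (fun x => S i1 i1 * (f x * p x) + D2 x * p x) := i3.add iD2
  rw [integral_sub i4 ixc2, integral_add i3 iD2, integral_const_mul] at z2
  have main : ∫ x : Fin n → ℝ, x i1 ^ 2 * f x * p x =
      (∫ x : Fin n → ℝ, (x i1 - μ i1) ^ 2 * (f x * p x))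
      + 2 * μ i1 * (∫ x : Fin n → ℝ, (x i1 - μ i1) * (f x * p x))
      + μ i1 ^ 2 * ∫ x, f x * p x := by
    have i5 : Integrable (fun x : Fin n → ℝ => 2 * μ i1 * ((x i1 - μ i1) * (f x * p x))) :=
      ixc.const_mul _
    have i6 : Integrable (fun x : Fin n → ℝ => (x i1 - μ i1) ^ 2 * (f x * p x)
        + 2 * μ i1 * ((x i1 - μ i1) * (f x * p x))) := ixc2.add i5
    rw [← integral_const_mul, ← integral_const_mul, ← integral_add ixc2 i5,
      ← integral_add i6 (hint3.const_mul _)]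
    congr 1
    funext x
    ring
  rw [main, ← eD, ← eD2]
  linear_combination -z2 - 2 * μ i1 * z1
end
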